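/- Let n ≥ 9 and s ≥ 2 be integers. Then there exists a 1-difference basis in Z_{2^s}^{2n} (the direct product of 2n copies of the cyclic group of order 2^s) of size at most 2^{sn} + (2^s − 1)·2^{(s − 1/2)n}. Consequently, lim_{n → ∞} η₁(Z_{2^s}^{2n}) / 2^{sn} = 1. -/

import Mathlib

/-!
Let `D` be a ring that is free of rank `n` over `ℤ` with `D / 2` the field `K` of `2 ^ n` elements,
so that `(D × D) / 2 ^ s` is `Z_{2^s}^{2n}` as a group. Choose `σ : K → D` such that `σ x` reduces to
a square root of `x`. Every `d : D` with nonzero image in `K` can be written as `σ x ^ 2 - σ y ^ 2`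
modulo `4` (`exists_sq_sub_sq`), and then `x - y` is the image of `d`.

* For `s = 2`, the `2 ^ (2n)` pairs `(σ x ^ 2, σ y ^ 2)` have differences covering everything except
  the two subgroups of index `2 ^ n` on which one coordinate vanishes modulo `2`
  (`exists_basis_two`).
* For `s = 3`, the `2 ^ (3n)` pairs `(σ x ^ 2 + 4 z, σ y ^ 2 + 4 x z)` do the same: the terms in `z`
  contribute a `2 × 2` linear system over `K` whose determinant is the nonzero element `x₁ - y₁`
  (`exists_basis_three`).

A group of order `2 ^ N` in the exceptional part is covered by about `2 * 2 ^ (N / 2)` elements, the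
differences of two complementary pieces, which gives the error terms `3 * 2 ^ (3n/2)` and
`7 * 2 ^ (5n/2)`. A difference basis `B` modulo `2 ^ s` and a basis `C` modulo `4` combine to the
basis `B + 2 ^ s C` modulo `2 ^ (s + 2)`, and the bounds multiply to the required one
(`exists_basis`). The limit follows by comparison with the trivial lower bound `|G| ≤ |B| ^ 2`.
-/

open Filter Topology

/-- `B` is a `g`-difference basis for the additive group `G`: every `x ∈ G` has at least `g`
representations `x = b₁ - b₂` with ordered pairs `(b₁, b₂) ∈ B × B`. -/
def IsDiffBasis {G : Type*} [AddCommGroup G] (g : ℕ) (B : Set G) : Prop :=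
  ∀ x : G, g ≤ Nat.card {p : G × G // p.1 ∈ B ∧ p.2 ∈ B ∧ p.1 - p.2 = x}

/-- `η_g(G)`: the minimum size of a `g`-difference basis for `G`. -/
noncomputable def etaMin (G : Type*) [AddCommGroup G] (g : ℕ) : ℕ :=
  sInf {k : ℕ | ∃ B : Set G, B.Finite ∧ IsDiffBasis g B ∧ Nat.card B = k}

/-! ### Lifting the residue field -/

open Polynomial in
/-- A ring `D`, free of rank `n` over `ℤ`, in which `2` generates the kernel of a surjection onto
the field with `2 ^ n` elements: take `D = ℤ[X] / (f)`, where `f` is a monic lift of the minimal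
polynomial over `𝔽₂` of a generator of that field. Thus `D / 2 ^ s` is the Galois ring
`GR(2 ^ s, n)`. -/
theorem exists_lift_ring (n : ℕ) (hn : n ≠ 0) :
    ∃ (D : Type) (_ : CommRing D) (ρ : D →+* GaloisField 2 n),
      Module.Free ℤ D ∧ Module.Finite ℤ D ∧ Module.finrank ℤ D = n ∧
      Function.Surjective ρ ∧ ∀ d, ρ d = 0 → ∃ e, d = 2 * e := by
  obtain ⟨α, hα⟩ := Field.exists_primitive_element (ZMod 2) (GaloisField 2 n)
  have hint : IsIntegral (ZMod 2) α := Algebra.IsIntegral.isIntegral α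
  have hsurjZ : Function.Surjective (Int.castRingHom (ZMod 2)) := ZMod.intCast_surjective
  have hlift : ∀ p : (ZMod 2)[X], p ∈ lifts (Int.castRingHom (ZMod 2)) := fun p => by
    obtain ⟨q, hq⟩ := map_surjective _ hsurjZ p
    exact ⟨q, hq⟩
  obtain ⟨f, hfm, hfd, hf⟩ :=
    lifts_and_natDegree_eq_and_monic (hlift _) (minpoly.monic hint)
  have hcomp : (algebraMap (ZMod 2) (GaloisField 2 n)).comp (Int.castRingHom (ZMod 2)) =
      Int.castRingHom (GaloisField 2 n) := RingHom.ext_int _ _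
  have heval : ∀ g : ℤ[X], eval₂ (Int.castRingHom (GaloisField 2 n)) α g =
      aeval α (g.map (Int.castRingHom (ZMod 2))) := fun g => by
    rw [aeval_def, eval₂_map, hcomp]
  have hroot : eval₂ (Int.castRingHom (GaloisField 2 n)) α f = 0 := by
    rw [heval, hfm, minpoly.aeval]
  refine ⟨AdjoinRoot f, inferInstance, AdjoinRoot.lift _ α hroot, ?_, ?_, ?_, ?_, ?_⟩
  · exact Module.Free.of_basis (AdjoinRoot.powerBasis' hf).basis
  · exact (AdjoinRoot.powerBasis' hf).finite
  · rw [(AdjoinRoot.powerBasis' hf).finrank, AdjoinRoot.powerBasis'_dim, hfd,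
      ← IntermediateField.adjoin.finrank hint, hα, IntermediateField.finrank_top',
      GaloisField.finrank 2 hn]
  · intro k
    have hk : k ∈ (IntermediateField.adjoin (ZMod 2) {α}).toSubalgebra := by rw [hα]; trivial
    rw [IntermediateField.adjoin_simple_toSubalgebra_of_isAlgebraic hint.isAlgebraic,
      Algebra.adjoin_singleton_eq_range_aeval] at hk
    obtain ⟨p, hp⟩ := hk
    obtain ⟨q, rfl⟩ := map_surjective _ hsurjZ p
    exact ⟨AdjoinRoot.mk f q, by rw [AdjoinRoot.lift_mk, heval]; exact hp⟩
  · intro d hd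
    obtain ⟨g, rfl⟩ := AdjoinRoot.mk_surjective d
    rw [AdjoinRoot.lift_mk, heval] at hd
    obtain ⟨h, hh⟩ := minpoly.dvd _ _ hd
    obtain ⟨h, rfl⟩ := map_surjective _ hsurjZ h
    have h2 : C 2 ∣ g - f * h := by
      rw [C_dvd_iff_dvd_coeff]
      intro i
      have : ((g - f * h).map (Int.castRingHom (ZMod 2))).coeff i = 0 := by
        simp [Polynomial.map_sub, Polynomial.map_mul, hfm, hh]
      rw [coeff_map] at this
      exact (ZMod.intCast_zmod_eq_zero_iff_dvd _ 2).1 (by simpa using this)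
    obtain ⟨k, hk⟩ := h2
    refine ⟨AdjoinRoot.mk f k, ?_⟩
    have : g = f * h + C 2 * k := by rw [← hk]; ring
    rw [this, map_add, map_mul, map_mul, AdjoinRoot.mk_self, zero_mul, zero_add]
    exact congrArg (· * _) (map_ofNat (AdjoinRoot.of f) 2)

/-- `D / 2` splits into two pieces of sizes `2 ^ h` and `2 ^ (n - h)`: lift a subgroup of order
`2 ^ h` of the residue field for `S`, and the negatives of coset representatives for `T`. -/
theorem exists_split (n h : ℕ) (hn : n ≠ 0) (hh : h ≤ n) {D : Type} [CommRing D]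
    (ρ : D →+* GaloisField 2 n) (hρ : Function.Surjective ρ)
    (hker : ∀ d, ρ d = 0 → ∃ e, d = 2 * e) :
    ∃ S T : Finset D, S.card ≤ 2 ^ h ∧ T.card ≤ 2 ^ (n - h) ∧
      ∀ d, ∃ a ∈ S, ∃ c ∈ T, ∃ z, d = a - c + 2 * z := by
  classical
  have : Fintype (GaloisField 2 n) := Fintype.ofFinite _
  have hcard := GaloisField.card 2 n hn
  obtain ⟨H, hH⟩ := Sylow.exists_subgroup_card_pow_prime
    (G := Multiplicative (GaloisField 2 n)) 2 (n := h)
    (by rw [Nat.card_congr Multiplicative.toAdd, hcard]; exact pow_dvd_pow 2 hh)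
  set Q := Multiplicative (GaloisField 2 n) ⧸ H
  have hidx : Nat.card Q = 2 ^ (n - h) := by
    have := H.card_mul_index
    rw [hH, Nat.card_congr Multiplicative.toAdd, hcard, ← pow_mul_pow_sub 2 hh] at this
    exact Nat.eq_of_mul_eq_mul_left (by positivity) this
  choose τ hτ using hρ
  have : Fintype H := Fintype.ofFinite _
  have : Fintype Q := Fintype.ofFinite _
  refine ⟨Finset.univ.image fun x : H => τ x.1.toAdd,
    Finset.univ.image fun q : Q => - τ q.out.toAdd, ?_, ?_, fun d => ?_⟩
  · exact Finset.card_image_le.trans (by rw [Finset.card_univ, ← Nat.card_eq_fintype_card, hH])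
  · exact Finset.card_image_le.trans (by rw [Finset.card_univ, ← Nat.card_eq_fintype_card, hidx])
  · let q : Q := QuotientGroup.mk (Multiplicative.ofAdd (ρ d))
    have hq : (q.out)⁻¹ * Multiplicative.ofAdd (ρ d) ∈ H :=
      QuotientGroup.eq.1 (QuotientGroup.out_eq' q)
    obtain ⟨z, hz⟩ := hker (d - τ (Multiplicative.toAdd ((q.out)⁻¹ * Multiplicative.ofAdd (ρ d)))
      - τ q.out.toAdd) (by simp [hτ])
    refine ⟨_, Finset.mem_image_of_mem _ (Finset.mem_univ ⟨_, hq⟩), _,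
      Finset.mem_image_of_mem _ (Finset.mem_univ q), z, ?_⟩
    rw [← hz]; ring

/-- If `σ` picks lifts of square roots, then `x ↦ σ x ^ 2` is a Teichmüller-type section modulo `4`:
any `d` that is nonzero in the residue field is a difference of two of its values modulo `4`.
Writing `d = t² + 2e` with `t` a lift of a square root of `d`, and `σ x ≡ σ y + t` modulo `2`, the
difference of squares is `t² + 2 t (σ y)` modulo `4`, so `σ y` is found by dividing `e` by `t`. -/
theorem exists_sq_sub_sq {K D : Type} [Field K] [CharP K 2] [CommRing D] (ρ : D →+* K)
    (hker : ∀ d, ρ d = 0 → ∃ e, d = 2 * e) (σ : K → D) (hσ : ∀ k, ρ (σ k) ^ 2 = k)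
    (d : D) (hd : ρ d ≠ 0) : ∃ x y e, d = σ x ^ 2 - σ y ^ 2 + 4 * e ∧ x - y = ρ d := by
  have hsq : ∀ a b : K, a ^ 2 = b ^ 2 → a = b := fun a b h => by
    have : (a - b) ^ 2 = 0 := by rw [sub_pow_char_of_commute _ (Commute.all a b), h, sub_self]
    exact sub_eq_zero.1 (pow_eq_zero_iff two_ne_zero |>.1 this)
  set t := σ (ρ d) with ht
  have htne : ρ t ≠ 0 := fun h => hd (by rw [← hσ (ρ d), ← ht, h]; simp)
  obtain ⟨e, he⟩ := hker (d - t ^ 2) (by rw [map_sub, map_pow, hσ, sub_self])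
  set y := (ρ e / ρ t) ^ 2 with hy
  have hy' : ρ (σ y) = ρ e / ρ t := hsq _ _ (by rw [hσ])
  have hx' : ρ (σ (ρ d + y)) = ρ (σ y) + ρ t :=
    hsq _ _ (by rw [hσ, add_pow_char_of_commute _ (Commute.all _ _), hσ, hσ, add_comm])
  obtain ⟨w, hw⟩ := hker (σ (ρ d + y) - σ y - t) (by rw [map_sub, map_sub, hx']; ring)
  obtain ⟨v, hv⟩ := hker (e - t * σ y) (by rw [map_sub, map_mul, hy']; field_simp; simp)
  refine ⟨ρ d + y, y, v - w * (σ y + t + w), ?_, by ring⟩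
  linear_combination he - (σ (ρ d + y) + σ y + t + 2 * w) * hw + 2 * hv

/-! ### Difference bases modulo powers of two -/

/-- The image of `B` in `M / 2 ^ s` is a `1`-difference basis. Keeping `B` inside `M` itself lets
bases for different `s` be combined without forming quotients. -/
def IsDiffBasisMod {M : Type} [AddCommGroup M] (s : ℕ) (B : Finset M) : Prop :=
  ∀ x, ∃ b ∈ B, ∃ c ∈ B, ∃ z, x = b - c + 2 ^ s • z

/-- Submultiplicativity along the chain `2 ^ (s + t) M ≤ 2 ^ s M ≤ M`: the set `B + 2 ^ s C` is a
difference basis modulo `2 ^ (s + t)`. -/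
theorem exists_isDiffBasisMod_add {M : Type} [AddCommGroup M] {s t : ℕ} {B C : Finset M}
    (hB : IsDiffBasisMod s B) (hC : IsDiffBasisMod t C) :
    ∃ E : Finset M, E.card ≤ B.card * C.card ∧ IsDiffBasisMod (s + t) E := by
  classical
  refine ⟨Finset.image₂ (fun b c => b + 2 ^ s • c) B C, Finset.card_image₂_le _ _ _, fun x => ?_⟩
  obtain ⟨b, hb, b', hb', z, rfl⟩ := hB x
  obtain ⟨c, hc, c', hc', w, rfl⟩ := hC z
  refine ⟨_, Finset.mem_image₂_of_mem hb hc, _, Finset.mem_image₂_of_mem hb' hc', w, ?_⟩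
  rw [smul_add, smul_sub, smul_smul, pow_add]
  abel

theorem eq_sub_add_smul {D : Type} [CommRing D] {d b c z : D × D} {k : ℕ}
    (h₁ : d.1 = b.1 - c.1 + k * z.1) (h₂ : d.2 = b.2 - c.2 + k * z.2) : d = b - c + k • z :=
  Prod.ext (by simpa using h₁) (by simpa using h₂)

section Bases

variable {n : ℕ} {D : Type} [CommRing D] {ρ : D →+* GaloisField 2 n}

theorem exists_transversal (hn : n ≠ 0) (hρ : Function.Surjective ρ)
    (hker : ∀ d, ρ d = 0 → ∃ e, d = 2 * e) :
    ∃ F : Finset D, F.card ≤ 2 ^ n ∧ ∀ d, ∃ f ∈ F, ∃ e, d = f + 2 * e := by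
  classical
  have : Fintype (GaloisField 2 n) := Fintype.ofFinite _
  choose τ hτ using hρ
  refine ⟨Finset.univ.image τ, Finset.card_image_le.trans ?_, fun d =>
    ⟨_, Finset.mem_image_of_mem τ (Finset.mem_univ (ρ d)), ?_⟩⟩
  · rw [Finset.card_univ, ← Nat.card_eq_fintype_card, GaloisField.card 2 n hn]
  · obtain ⟨e, he⟩ := hker (d - τ (ρ d)) (by rw [map_sub, hτ, sub_self])
    exact ⟨e, by rw [← he]; ring⟩

theorem exists_sqrt (hρ : Function.Surjective ρ) :
    ∃ σ : GaloisField 2 n → D, ∀ k, ρ (σ k) ^ 2 = k := by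
  have : ∀ k, ∃ d, ρ d ^ 2 = k := fun k => by
    obtain ⟨r, hr⟩ := FiniteField.isSquare_of_char_two (ringChar.eq (GaloisField 2 n) 2) k
    obtain ⟨d, rfl⟩ := hρ r
    exact ⟨d, by rw [hr, sq]⟩
  exact ⟨fun k => (this k).choose, fun k => (this k).choose_spec⟩

/-- The set of pairs `(σ x ^ 2, σ y ^ 2)` covers, modulo `4`, every `(d₁, d₂)` with both entries
nonzero in the residue field. The two remaining subgroups `d₁ ≡ 0` and `d₂ ≡ 0` modulo `2`, of
index `2 ^ n`, are covered by the differences between two rectangular sets and one common set. -/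
theorem exists_basis_two (hn : n ≠ 0) (hρ : Function.Surjective ρ)
    (hker : ∀ d, ρ d = 0 → ∃ e, d = 2 * e) {h : ℕ} (hh : h ≤ n) :
    ∃ B : Finset (D × D), IsDiffBasisMod 2 B ∧
      B.card ≤ 2 ^ n * 2 ^ n + (2 ^ h * 2 ^ n + 2 ^ h * 2 ^ n + 2 ^ (n - h) * 2 ^ n) := by
  classical
  have : Fintype (GaloisField 2 n) := Fintype.ofFinite _
  have hK : (Finset.univ : Finset (GaloisField 2 n)).card = 2 ^ n := by
    rw [Finset.card_univ, ← Nat.card_eq_fintype_card, GaloisField.card 2 n hn]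
  obtain ⟨S, T, hS, hT, hST⟩ := exists_split n h hn hh ρ hρ hker
  obtain ⟨F, hF, hFd⟩ := exists_transversal hn hρ hker
  obtain ⟨σ, hσ⟩ := exists_sqrt hρ
  refine ⟨Finset.image₂ (fun x y => (σ x ^ 2, σ y ^ 2)) Finset.univ Finset.univ ∪
    (Finset.image₂ (fun a f => (2 * a, f)) S F ∪
     Finset.image₂ (fun a f => (f + 2 * a, 0)) S F ∪
     Finset.image₂ (fun c f => (2 * c, 2 * f)) T F), fun ⟨d₁, d₂⟩ => ?_, ?_⟩
  · by_cases h₁ : ρ d₁ = 0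
    · obtain ⟨v, rfl⟩ := hker _ h₁
      obtain ⟨a, ha, c, hc, z, rfl⟩ := hST v
      obtain ⟨f, hf, e, rfl⟩ := hFd d₂
      obtain ⟨f', hf', e', he'⟩ := hFd (-e)
      refine ⟨(2 * a, f), ?_, (2 * c, 2 * f'), ?_, (z, -e'), ?_⟩
      · simp only [Finset.mem_union]
        exact .inr (.inl (.inl (Finset.mem_image₂_of_mem ha hf)))
      · simp only [Finset.mem_union]
        exact .inr (.inr (Finset.mem_image₂_of_mem hc hf'))
      · refine eq_sub_add_smul ?_ ?_ <;> simp only [Nat.cast_pow, Nat.cast_ofNat]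
        · ring
        · linear_combination -2 * he'
    by_cases h₂ : ρ d₂ = 0
    · obtain ⟨v, rfl⟩ := hker _ h₂
      obtain ⟨f, hf, e, rfl⟩ := hFd d₁
      obtain ⟨a, ha, c, hc, z, rfl⟩ := hST e
      obtain ⟨f', hf', e', he'⟩ := hFd (-v)
      refine ⟨(f + 2 * a, 0), ?_, (2 * c, 2 * f'), ?_, (z, -e'), ?_⟩
      · simp only [Finset.mem_union]
        exact .inr (.inl (.inr (Finset.mem_image₂_of_mem ha hf)))
      · simp only [Finset.mem_union]
        exact .inr (.inr (Finset.mem_image₂_of_mem hc hf'))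
      · refine eq_sub_add_smul ?_ ?_ <;> simp only [Nat.cast_pow, Nat.cast_ofNat]
        · ring
        · linear_combination -2 * he'
    obtain ⟨x₁, y₁, e₁, hd₁, -⟩ := exists_sq_sub_sq ρ hker σ hσ d₁ h₁
    obtain ⟨x₂, y₂, e₂, hd₂, -⟩ := exists_sq_sub_sq ρ hker σ hσ d₂ h₂
    refine ⟨(σ x₁ ^ 2, σ x₂ ^ 2), ?_, (σ y₁ ^ 2, σ y₂ ^ 2), ?_, (e₁, e₂), ?_⟩
    · exact Finset.mem_union_left _
        (Finset.mem_image₂_of_mem (Finset.mem_univ x₁) (Finset.mem_univ x₂))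
    · exact Finset.mem_union_left _
        (Finset.mem_image₂_of_mem (Finset.mem_univ y₁) (Finset.mem_univ y₂))
    · refine eq_sub_add_smul ?_ ?_ <;> simp only [Nat.cast_pow, Nat.cast_ofNat]
      · linear_combination hd₁
      · linear_combination hd₂
  · refine (Finset.card_union_le _ _).trans (add_le_add ?_ <|
      (Finset.card_union_le _ _).trans (add_le_add
        ((Finset.card_union_le _ _).trans (add_le_add ?_ ?_)) ?_)) <;>
    refine (Finset.card_image₂_le _ _ _).trans ?_ <;> (try rw [hK]) <;> gcongr

/-- The set of pairs `(σ x ^ 2 + 4 z, σ y ^ 2 + 4 x z)`, with `x`, `y`, `z` in the residue field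
(`z` and `x z` being lifted by `τ`), covers, modulo `8`, every `(d₁, d₂)` with both entries nonzero
in the residue field: once the squares match `(d₁, d₂)` modulo `4`, the remaining equations
`z₁ - z₂ = e₁`, `x₁ z₁ - y₁ z₂ = e₂` are linear in `(z₁, z₂)` with determinant `x₁ - y₁ = d₁ ≠ 0`.
The two exceptional subgroups of index `2 ^ n` are covered by `A - C` and its image under swapping
the coordinates. -/
theorem exists_basis_three (hn : n ≠ 0) (hρ : Function.Surjective ρ)
    (hker : ∀ d, ρ d = 0 → ∃ e, d = 2 * e) {h : ℕ} (hh : h ≤ n) :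
    ∃ B : Finset (D × D), IsDiffBasisMod 3 B ∧
      B.card ≤ 2 ^ n * (2 ^ n * 2 ^ n) + 2 * (2 ^ h * (2 ^ n * 2 ^ n) +
        2 ^ (n - h) * (2 ^ n * 2 ^ n)) := by
  classical
  have : Fintype (GaloisField 2 n) := Fintype.ofFinite _
  have hK : (Finset.univ : Finset (GaloisField 2 n)).card = 2 ^ n := by
    rw [Finset.card_univ, ← Nat.card_eq_fintype_card, GaloisField.card 2 n hn]
  obtain ⟨S, T, hS, hT, hST⟩ := exists_split n h hn hh ρ hρ hker
  obtain ⟨F, hF, hFd⟩ := exists_transversal hn hρ hker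
  obtain ⟨σ, hσ⟩ := exists_sqrt hρ
  choose τ hτ using hρ
  set A : Finset (D × D) := Finset.image₂ (fun a (p : D × D) => (2 * a, p.1 + 2 * p.2)) S (F ×ˢ F)
    with hA
  set C : Finset (D × D) :=
    Finset.image₂ (fun c (p : D × D) => (2 * c + 4 * p.1, 4 * p.2)) T (F ×ˢ F) with hC
  have hAc : A.card ≤ 2 ^ h * (2 ^ n * 2 ^ n) := by
    refine (Finset.card_image₂_le _ _ _).trans ?_
    rw [Finset.card_product]; gcongr
  have hCc : C.card ≤ 2 ^ (n - h) * (2 ^ n * 2 ^ n) := by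
    refine (Finset.card_image₂_le _ _ _).trans ?_
    rw [Finset.card_product]; gcongr
  -- The differences `A - C` cover the subgroup `d₁ ≡ 0` modulo `2`.
  have key : ∀ d₁ d₂, ρ d₁ = 0 → ∃ p ∈ A, ∃ q ∈ C, ∃ z : D × D,
      d₁ = p.1 - q.1 + 8 * z.1 ∧ d₂ = p.2 - q.2 + 8 * z.2 := by
    intro d₁ d₂ h₁
    obtain ⟨v, rfl⟩ := hker _ h₁
    obtain ⟨a, ha, c, hc, z, rfl⟩ := hST v
    obtain ⟨f', hf', z', hz'⟩ := hFd (-z)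
    obtain ⟨f, hf, e, rfl⟩ := hFd d₂
    obtain ⟨g, hg, e', rfl⟩ := hFd e
    obtain ⟨g', hg', e'', he''⟩ := hFd (-e')
    refine ⟨_, Finset.mem_image₂_of_mem ha (Finset.mk_mem_product hf hg), _,
      Finset.mem_image₂_of_mem hc (Finset.mk_mem_product hf' hg'), (-z', -e''), ?_, ?_⟩ <;>
      simp only
    · linear_combination -4 * hz'
    · linear_combination -4 * he''
  refine ⟨Finset.image₂ (fun x (p : GaloisField 2 n × GaloisField 2 n) =>
      (σ x ^ 2 + 4 * τ p.2, σ p.1 ^ 2 + 4 * τ (x * p.2))) Finset.univ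
        (Finset.univ ×ˢ Finset.univ) ∪
      ((A ∪ C) ∪ (A ∪ C).image Prod.swap), fun ⟨d₁, d₂⟩ => ?_, ?_⟩
  · by_cases h₁ : ρ d₁ = 0
    · obtain ⟨p, hp, q, hq, z, hz₁, hz₂⟩ := key d₁ d₂ h₁
      refine ⟨p, ?_, q, ?_, z, ?_⟩
      · simp [hp]
      · simp [hq]
      · refine eq_sub_add_smul ?_ ?_ <;> simp only [Nat.cast_pow, Nat.cast_ofNat]
        · linear_combination hz₁
        · linear_combination hz₂
    by_cases h₂ : ρ d₂ = 0
    · obtain ⟨p, hp, q, hq, z, hz₁, hz₂⟩ := key d₂ d₁ h₂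
      refine ⟨p.swap, ?_, q.swap, ?_, z.swap, ?_⟩
      · exact Finset.mem_union_right _ (Finset.mem_union_right _
          (Finset.mem_image_of_mem _ (Finset.mem_union_left _ hp)))
      · exact Finset.mem_union_right _ (Finset.mem_union_right _
          (Finset.mem_image_of_mem _ (Finset.mem_union_right _ hq)))
      · refine eq_sub_add_smul ?_ ?_ <;> simp only [Nat.cast_pow, Nat.cast_ofNat, Prod.fst_swap, Prod.snd_swap]
        · linear_combination hz₂
        · linear_combination hz₁
    obtain ⟨x₁, y₁, e₁, hd₁, hu₁⟩ := exists_sq_sub_sq ρ hker σ hσ d₁ h₁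
    obtain ⟨x₂, y₂, e₂, hd₂, -⟩ := exists_sq_sub_sq ρ hker σ hσ d₂ h₂
    -- The solution `(z₁, z₂) = (ρ e₁ + w, w)` of the linear system over the residue field.
    set w := (ρ e₂ - x₁ * ρ e₁) / ρ d₁ with hw
    have hwd : w * ρ d₁ = ρ e₂ - x₁ * ρ e₁ := div_mul_cancel₀ _ h₁
    obtain ⟨g₁, hg₁⟩ := hker (e₁ - (τ (ρ e₁ + w) - τ w)) (by simp [hτ])
    obtain ⟨g₂, hg₂⟩ := hker (e₂ - (τ (x₁ * (ρ e₁ + w)) - τ (y₁ * w))) (by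
      simp only [map_sub, hτ]
      linear_combination -hwd - w * hu₁)
    refine ⟨_, Finset.mem_union_left _ (Finset.mem_image₂_of_mem (Finset.mem_univ x₁)
        (Finset.mk_mem_product (Finset.mem_univ x₂) (Finset.mem_univ (ρ e₁ + w)))), _,
      Finset.mem_union_left _ (Finset.mem_image₂_of_mem (Finset.mem_univ y₁)
        (Finset.mk_mem_product (Finset.mem_univ y₂) (Finset.mem_univ w))), (g₁, g₂), ?_⟩
    refine eq_sub_add_smul ?_ ?_ <;> simp only [Nat.cast_pow, Nat.cast_ofNat]
    · linear_combination hd₁ + 4 * hg₁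
    · linear_combination hd₂ + 4 * hg₂
  · have hAC : (A ∪ C).card ≤ 2 ^ h * (2 ^ n * 2 ^ n) + 2 ^ (n - h) * (2 ^ n * 2 ^ n) :=
      (Finset.card_union_le _ _).trans (add_le_add hAc hCc)
    refine (Finset.card_union_le _ _).trans (add_le_add ?_ <|
      (Finset.card_union_le _ _).trans ?_)
    · refine (Finset.card_image₂_le _ _ _).trans ?_
      rw [Finset.card_product, hK]
    · rw [two_mul]
      exact add_le_add hAC (Finset.card_image_le.trans hAC)

end Bases

/-! ### Size estimates -/

/-- For odd `n = 2 h + 1`, `Y = √2 * 2 ^ h`, and `4 / 3 ≤ √2`. -/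
theorem four_mul_pow_le {h : ℕ} {Y : ℝ} (hY : 0 < Y) (hYn : Y ^ 2 = 2 ^ (2 * h + 1)) :
    4 * 2 ^ h ≤ 3 * Y := by
  refine (pow_le_pow_iff_left₀ (by positivity) (by positivity) two_ne_zero).1 ?_
  rw [mul_pow, mul_pow, hYn, pow_succ 2 (2 * h), pow_mul']
  nlinarith [sq_nonneg ((2 : ℝ) ^ h)]

/-- With `Y = 2 ^ (n / 2)`; this is an equality when `n` is even. -/
theorem base_two_bound {n : ℕ} {Y : ℝ} (hY : 0 < Y) (hYn : Y ^ 2 = 2 ^ n) :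
    (2 : ℝ) ^ n * 2 ^ n + (2 ^ (n / 2) * 2 ^ n + 2 ^ (n / 2) * 2 ^ n + 2 ^ (n - n / 2) * 2 ^ n) ≤
      Y ^ 4 + 3 * Y ^ 3 := by
  obtain ⟨h, rfl | rfl⟩ := n.even_or_odd'
  · rw [show 2 * h / 2 = h by omega, show 2 * h - h = h by omega]
    have hP : Y = 2 ^ h := by
      rw [← pow_left_inj₀ hY.le (by positivity) two_ne_zero, hYn]; ring
    rw [← hYn, ← hP]
    exact le_of_eq (by ring)
  · rw [show (2 * h + 1) / 2 = h by omega, show 2 * h + 1 - h = h + 1 by omega, ← hYn, pow_succ 2 h]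
    have hP := four_mul_pow_le hY hYn
    nlinarith [mul_le_mul_of_nonneg_right hP (sq_nonneg Y)]

theorem base_three_bound {n : ℕ} {Y : ℝ} (hY : 0 < Y) (hYn : Y ^ 2 = 2 ^ n) :
    (2 : ℝ) ^ n * (2 ^ n * 2 ^ n) + 2 * (2 ^ (n / 2) * (2 ^ n * 2 ^ n) +
      2 ^ (n - n / 2) * (2 ^ n * 2 ^ n)) ≤ Y ^ 6 + 7 * Y ^ 5 := by
  obtain ⟨h, rfl | rfl⟩ := n.even_or_odd'
  · rw [show 2 * h / 2 = h by omega, show 2 * h - h = h by omega]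
    have hP : Y = 2 ^ h := by
      rw [← pow_left_inj₀ hY.le (by positivity) two_ne_zero, hYn]; ring
    rw [← hYn, ← hP]
    nlinarith [pow_pos hY 5]
  · rw [show (2 * h + 1) / 2 = h by omega, show 2 * h + 1 - h = h + 1 by omega, ← hYn, pow_succ 2 h]
    have hP := four_mul_pow_le hY hYn
    nlinarith [mul_le_mul_of_nonneg_right hP (pow_pos hY 4).le, pow_pos hY 5]

/-- The bound holds for `s = 2, 3` and passes from `s` to `s + 2` by combining with the basis for
`s = 2`, since `(1 + (2 ^ s - 1) / Y) (1 + 3 / Y) ≤ 1 + (2 ^ (s + 2) - 1) / Y` for `Y ≥ 1`. -/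
theorem exists_basis {n : ℕ} {D : Type} [CommRing D] {ρ : D →+* GaloisField 2 n} (hn : n ≠ 0)
    (hρ : Function.Surjective ρ) (hker : ∀ d, ρ d = 0 → ∃ e, d = 2 * e) {Y : ℝ} (hY : 1 ≤ Y)
    (hYn : Y ^ 2 = 2 ^ n) (s : ℕ) (hs : 2 ≤ s) :
    ∃ B : Finset (D × D), IsDiffBasisMod s B ∧
      (B.card : ℝ) ≤ Y ^ (2 * s) + (2 ^ s - 1) * Y ^ (2 * s - 1) := by
  have hY0 : 0 < Y := by linarith
  obtain ⟨B, hB, hBc⟩ := exists_basis_two hn hρ hker (Nat.div_le_self n 2)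
  have hBc' : (B.card : ℝ) ≤ Y ^ 4 + 3 * Y ^ 3 :=
    le_trans (by exact_mod_cast hBc) (base_two_bound hY0 hYn)
  induction s using Nat.strong_induction_on with
  | _ s ih =>
    obtain rfl | rfl | h4 : s = 2 ∨ s = 3 ∨ 4 ≤ s := by omega
    · exact ⟨B, hB, hBc'.trans (by norm_num)⟩
    · obtain ⟨C, hC, hCc⟩ := exists_basis_three hn hρ hker (Nat.div_le_self n 2)
      refine ⟨C, hC, le_trans (b := Y ^ 6 + 7 * Y ^ 5) ?_ (by norm_num)⟩
      exact le_trans (by exact_mod_cast hCc) (base_three_bound hY0 hYn)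
    · obtain ⟨t, rfl⟩ : ∃ t, s = t + 1 + 2 := ⟨s - 3, by omega⟩
      obtain ⟨C, hC, hCc⟩ := ih (t + 1) (by omega) (by omega)
      obtain ⟨E, hE, hEd⟩ := exists_isDiffBasisMod_add hC hB
      refine ⟨E, hEd, ?_⟩
      rw [show 2 * (t + 1) - 1 = 2 * t + 1 by omega] at hCc
      rw [show 2 * (t + 1 + 2) - 1 = 2 * t + 1 + 4 by omega]
      have ht : (1 : ℝ) ≤ 2 ^ (t + 1) := one_le_pow₀ (by norm_num)
      calc (E.card : ℝ) ≤ C.card * B.card := by exact_mod_cast hE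
        _ ≤ (Y ^ (2 * (t + 1)) + (2 ^ (t + 1) - 1) * Y ^ (2 * t + 1)) * (Y ^ 4 + 3 * Y ^ 3) := by
          gcongr
        _ = Y ^ (2 * (t + 1 + 2)) + (2 ^ (t + 1) + 2) * Y ^ (2 * t + 1 + 4) +
            3 * (2 ^ (t + 1) - 1) * Y ^ (2 * t + 1 + 3) := by ring
        _ ≤ Y ^ (2 * (t + 1 + 2)) + (2 ^ (t + 1) + 2) * Y ^ (2 * t + 1 + 4) +
            3 * (2 ^ (t + 1) - 1) * Y ^ (2 * t + 1 + 4) := by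
          have : Y ^ (2 * t + 1 + 3) ≤ Y ^ (2 * t + 1 + 4) :=
            pow_le_pow_right₀ hY (by omega)
          have h3 : (0 : ℝ) ≤ 3 * (2 ^ (t + 1) - 1) := by linarith
          gcongr
        _ = _ := by ring

/-! ### Transfer to the product of cyclic groups -/

theorem isDiffBasis_one_iff {G : Type*} [AddCommGroup G] [Finite G] {B : Set G} :
    IsDiffBasis 1 B ↔ ∀ x, ∃ b ∈ B, ∃ c ∈ B, b - c = x := by
  refine forall_congr' fun x => ?_
  rw [Nat.one_le_iff_ne_zero, ← Nat.pos_iff_ne_zero, Finite.card_pos_iff]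
  exact ⟨fun ⟨p, h₁, h₂, h₃⟩ => ⟨_, h₁, _, h₂, h₃⟩, fun ⟨b, h₁, c, h₂, h₃⟩ => ⟨(b, c), h₁, h₂, h₃⟩⟩

theorem exists_isDiffBasis {n s : ℕ} (hn : n ≠ 0) (hs : 2 ≤ s) {Y : ℝ} (hY : 1 ≤ Y)
    (hYn : Y ^ 2 = 2 ^ n) :
    ∃ B : Set (Fin (2 * n) → ZMod (2 ^ s)), B.Finite ∧ IsDiffBasis 1 B ∧
      (Nat.card B : ℝ) ≤ Y ^ (2 * s) + (2 ^ s - 1) * Y ^ (2 * s - 1) := by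
  classical
  obtain ⟨D, _, ρ, _, _, hrank, hρ, hker⟩ := exists_lift_ring n hn
  obtain ⟨B, hB, hBc⟩ := exists_basis hn hρ hker hY hYn s hs
  -- `D × D` is free of rank `2 n`, so reducing coordinates modulo `2 ^ s` maps it onto the group,
  -- and this map kills `2 ^ s (D × D)`.
  let φ : (D × D) ≃ₗ[ℤ] (Fin (2 * n) → ℤ) := LinearEquiv.ofFinrankEq _ _ (by
    rw [Module.finrank_prod, hrank, Module.finrank_fin_fun, two_mul])
  let Φ : D × D →+ (Fin (2 * n) → ZMod (2 ^ s)) :=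
    ((Int.castAddHom (ZMod (2 ^ s))).compLeft (Fin (2 * n))).comp φ.toLinearMap.toAddMonoidHom
  have hΦ : Function.Surjective Φ := fun y => by
    choose z hz using fun i => ZMod.intCast_surjective (y i)
    exact ⟨φ.symm z, funext fun i => by simp [Φ, hz]⟩
  have hkill : ∀ z, Φ (2 ^ s • z) = 0 := fun z => by
    rw [map_nsmul]
    ext i
    rw [Pi.smul_apply, nsmul_eq_mul, ZMod.natCast_self, zero_mul, Pi.zero_apply]
  refine ⟨↑(B.image Φ), Finset.finite_toSet _, ?_, ?_⟩
  · rw [isDiffBasis_one_iff]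
    intro x
    obtain ⟨d, rfl⟩ := hΦ x
    obtain ⟨b, hb, c, hc, z, rfl⟩ := hB d
    exact ⟨Φ b, Finset.mem_image_of_mem _ hb, Φ c, Finset.mem_image_of_mem _ hc, by
      rw [map_add, hkill, add_zero, map_sub]⟩
  · refine le_trans ?_ hBc
    rw [Nat.card_coe_set_eq, Set.ncard_coe_finset]
    exact_mod_cast Finset.card_image_le

theorem card_le_sq {G : Type*} [AddCommGroup G] [Finite G] {B : Set G} (hB : IsDiffBasis 1 B) :
    Nat.card G ≤ Nat.card B ^ 2 := by
  rw [isDiffBasis_one_iff] at hB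
  rw [sq, ← Nat.card_prod]
  refine Nat.card_le_card_of_surjective (fun p : B × B => (p.1 : G) - p.2) fun x => ?_
  obtain ⟨b, hb, c, hc, h⟩ := hB x
  exact ⟨(⟨b, hb⟩, ⟨c, hc⟩), h⟩

theorem two_rpow_eq (s n : ℕ) (hs : 2 ≤ s) :
    (2 : ℝ) ^ (((s : ℝ) - 1 / 2) * (n : ℝ)) = ((2 : ℝ) ^ ((n : ℝ) / 2)) ^ (2 * s - 1) := by
  rw [← Real.rpow_natCast, ← Real.rpow_mul (by norm_num), Nat.cast_sub (by omega)]
  congr 1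
  push_cast
  ring

theorem two_rpow_half_sq (n : ℕ) : ((2 : ℝ) ^ ((n : ℝ) / 2)) ^ 2 = 2 ^ n := by
  rw [← Real.rpow_natCast, ← Real.rpow_mul (by norm_num), ← Real.rpow_natCast]
  congr 1
  push_cast
  ring

theorem exists_isDiffBasis_rpow {n s : ℕ} (hn : n ≠ 0) (hs : 2 ≤ s) :
    ∃ B : Set (Fin (2 * n) → ZMod (2 ^ s)), B.Finite ∧ IsDiffBasis 1 B ∧
      (Nat.card B : ℝ) ≤ (2 : ℝ) ^ (s * n) +
        ((2 : ℝ) ^ s - 1) * (2 : ℝ) ^ (((s : ℝ) - 1 / 2) * (n : ℝ)) := by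
  have h := exists_isDiffBasis hn hs
    (Real.one_le_rpow (by norm_num : (1 : ℝ) ≤ 2) (by positivity : (0 : ℝ) ≤ (n : ℝ) / 2))
    (two_rpow_half_sq n)
  rwa [pow_mul, two_rpow_half_sq, ← pow_mul, mul_comm n s, ← two_rpow_eq s n hs] at h

/-- For `s ≥ 2` and `n ≥ 9`, there is a 1-difference basis in `Z_{2^s}^{2n}` of size at most
`2^{sn} + (2^s − 1) 2^{(s − 1/2)n}`; consequently `η₁(Z_{2^s}^{2n}) = (1 + o(1)) 2^{sn}`. -/
theorem stmt18 (s : ℕ) (hs : 2 ≤ s) :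
    (∀ n : ℕ, 9 ≤ n →
      ∃ B : Set (Fin (2 * n) → ZMod (2 ^ s)), B.Finite ∧ IsDiffBasis 1 B ∧
        (Nat.card B : ℝ) ≤ (2 : ℝ) ^ (s * n) +
          ((2 : ℝ) ^ s - 1) * (2 : ℝ) ^ (((s : ℝ) - 1 / 2) * (n : ℝ))) ∧
    Filter.Tendsto (fun n : ℕ => (etaMin (Fin (2 * n) → ZMod (2 ^ s)) 1 : ℝ) /
        (2 : ℝ) ^ (s * n)) Filter.atTop (nhds 1) := by
  refine ⟨fun n hn => exists_isDiffBasis_rpow (by omega) hs, ?_⟩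
  have hlim : Tendsto (fun n : ℕ => 1 + ((2 : ℝ) ^ s - 1) * ((2 : ℝ) ^ (-(1 / 2) : ℝ)) ^ n)
      atTop (𝓝 1) := by
    have := (tendsto_pow_atTop_nhds_zero_of_lt_one (r := (2 : ℝ) ^ (-(1 / 2) : ℝ)) (by positivity)
      (Real.rpow_lt_one_of_one_lt_of_neg (by norm_num) (by norm_num))).const_mul ((2 : ℝ) ^ s - 1)
    simpa using this.const_add 1
  refine tendsto_of_tendsto_of_tendsto_of_le_of_le' tendsto_const_nhds hlim ?_ ?_ <;>
    filter_upwards [eventually_ne_atTop 0] with n hn <;>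
    obtain ⟨B, hBf, hB, hBc⟩ := exists_isDiffBasis_rpow hn hs
  -- Lower bound: `|G| ≤ |B| ^ 2` for a difference basis `B` of minimum size.
  · obtain ⟨E, -, hE, hEc⟩ := Nat.sInf_mem (s := {k : ℕ | ∃ B : Set (Fin (2 * n) → ZMod (2 ^ s)),
      B.Finite ∧ IsDiffBasis 1 B ∧ Nat.card B = k}) ⟨_, B, hBf, hB, rfl⟩
    have hsq := card_le_sq hE
    rw [hEc, Nat.card_fun, Nat.card_zmod, Nat.card_fin, ← pow_mul,
      show s * (2 * n) = s * n * 2 by ring, pow_mul, Nat.pow_le_pow_iff_left two_ne_zero] at hsq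
    rw [le_div_iff₀ (by positivity), one_mul]
    exact_mod_cast hsq
  · have hle : etaMin (Fin (2 * n) → ZMod (2 ^ s)) 1 ≤ Nat.card B :=
      Nat.sInf_le ⟨B, hBf, hB, rfl⟩
    rw [div_le_iff₀ (by positivity)]
    refine ((Nat.cast_le.2 hle).trans hBc).trans (le_of_eq ?_)
    rw [add_mul, one_mul, mul_assoc, ← Real.rpow_natCast 2 (s * n), ← Real.rpow_natCast _ n,
      ← Real.rpow_mul (by norm_num), ← Real.rpow_add (by norm_num)]
    congr 3
    push_cast
    ring
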